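/- arXiv:2308.16867 — 3 statements merged into one kernel-verified Lean document; each statement's English description precedes it below -/
import Mathlib

section
/- A topological space X is a uniformizable Alexandroff space if and only if the collection {V(a) : a ∈ X} of intersections of neighbourhoods is a partition of X into open subsets (each V(a) is open, and any two sets V(x), V(y) are either disjoint or equal). -/
open Set

variable {X : Type*}

/-- `V a` : the intersection of all open neighbourhoods of `a`. -/
def V [TopologicalSpace X] (a : X) : Set X :=
  ⋂₀ {U : Set X | IsOpen U ∧ a ∈ U}

/-- A topological space is uniformizable if its topology is induced by some
uniform structure. -/
def Uniformizable (X : Type*) [t : TopologicalSpace X] : Prop :=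
  ∃ u : UniformSpace X, u.toTopologicalSpace = t

/-!
`V x` is the set of points specializing to `x`. Hence the sets `V x` are pairwise equal or disjoint
exactly when specialization is symmetric, that is, when `X` is R₀. A uniform space is R₀.
Conversely, the Kolmogorov quotient of an R₀ Alexandroff space is T₁ and Alexandroff, hence
discrete, and `X` carries the uniform structure pulled back from it.
-/

section

variable [TopologicalSpace X]

theorem V_eq_nhdsKer (x : X) : V x = nhdsKer {x} := by
  simp only [V, nhdsKer_def, singleton_subset_iff]

theorem mem_V_iff_specializes {x y : X} : y ∈ V x ↔ y ⤳ x := by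
  rw [V_eq_nhdsKer, mem_nhdsKer_singleton]

theorem mem_V_self (x : X) : x ∈ V x :=
  mem_V_iff_specializes.2 specializes_rfl

theorem V_eq_V_iff_inseparable {x y : X} : V x = V y ↔ Inseparable x y := by
  rw [V_eq_nhdsKer, V_eq_nhdsKer, nhdsKer_eq_nhdsKer_iff_nhdsSet, nhdsSet_singleton,
    nhdsSet_singleton, Inseparable]

theorem alexandrovDiscrete_iff_forall_isOpen_V :
    AlexandrovDiscrete X ↔ ∀ x : X, IsOpen (V x) := by
  refine ⟨fun _ x => V_eq_nhdsKer x ▸ isOpen_nhdsKer, fun hopen => ?_⟩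
  refine alexandrovDiscrete_iff_nhds.2 fun x => ?_
  rw [← nhdsSet_singleton, ← nhdsSet_nhdsKer, ← V_eq_nhdsKer, (hopen x).nhdsSet_eq]

theorem r0Space_iff_V_eq_or_disjoint :
    R0Space X ↔ ∀ x y : X, V x = V y ∨ Disjoint (V x) (V y) := by
  refine ⟨fun _ x y => or_iff_not_imp_right.2 fun hxy => ?_, fun hpart => ⟨⟨fun x y hxy => ?_⟩⟩⟩
  · obtain ⟨z, hzx, hzy⟩ := not_disjoint_iff.1 hxy
    rw [mem_V_iff_specializes, specializes_iff_inseparable] at hzx hzy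
    exact V_eq_V_iff_inseparable.2 (hzx.symm.trans hzy)
  · have hmeet : ¬Disjoint (V x) (V y) :=
      not_disjoint_iff.2 ⟨x, mem_V_self x, mem_V_iff_specializes.2 hxy⟩
    exact (V_eq_V_iff_inseparable.1 ((hpart x y).resolve_right hmeet)).specializes'

theorem discreteTopology_separationQuotient [AlexandrovDiscrete X] [R0Space X] :
    DiscreteTopology (SeparationQuotient X) :=
  have : AlexandrovDiscrete (SeparationQuotient X) := Quotient.instAlexandrovDiscrete
  have : T1Space (SeparationQuotient X) := SeparationQuotient.t1Space_iff.2 ‹R0Space X›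
  inferInstance

theorem uniformizable_of_discreteTopology [DiscreteTopology X] : Uniformizable X :=
  ⟨⊥, DiscreteTopology.eq_bot.symm⟩

theorem Uniformizable.of_isInducing {Y : Type*} [TopologicalSpace Y] {f : X → Y}
    (hY : Uniformizable Y) (hf : Topology.IsInducing f) : Uniformizable X := by
  obtain ⟨u, rfl⟩ := hY
  exact ⟨u.comap f, hf.eq_induced.symm⟩

theorem Uniformizable.r0Space (hX : Uniformizable X) : R0Space X :=
  have := CompletelyRegularSpace.of_exists_uniformSpace hX
  inferInstance

theorem uniformizable_iff_r0Space [AlexandrovDiscrete X] : Uniformizable X ↔ R0Space X := by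
  refine ⟨Uniformizable.r0Space, fun _ => ?_⟩
  have := discreteTopology_separationQuotient (X := X)
  exact uniformizable_of_discreteTopology.of_isInducing SeparationQuotient.isInducing_mk

end

/-- `X` is a uniformizable Alexandroff space iff `{V a : a ∈ X}` is a partition
of `X` into open subsets (each `V a` is open, and any two such sets are either
equal or disjoint). -/
theorem stmt4 [TopologicalSpace X] :
    ((∀ a : X, IsOpen (V a)) ∧ Uniformizable X) ↔
      ((∀ a : X, IsOpen (V a)) ∧
        ∀ x y : X, V x = V y ∨ Disjoint (V x) (V y)) := by
  rw [← alexandrovDiscrete_iff_forall_isOpen_V, ← r0Space_iff_V_eq_or_disjoint]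
  exact and_congr_right fun _ => uniformizable_iff_r0Space
end

section
/- A topological space X is a uniformizable Alexandroff space if and only if there exists a partition P of X such that the uniform structure F_P = {α ⊆ X × X : ⋃{D × D : D ∈ P} ⊆ α} induces the topology of X. -/
open Set Topology

variable {X : Type*}

/-- The uniform structure `F_P` generated by the single entourage
`α₀ = ⋃ {D × D : D ∈ P}` associated with a collection `P` of subsets of `X`. -/
def FP (P : Set (Set X)) : Set (Set (X × X)) :=
  {α | (⋃ D ∈ P, D ×ˢ D) ⊆ α}

/-- The topology induced by the uniform structure `F_P`:
`U` is open iff for every `x ∈ U` there is an entourage `α ∈ F_P` with `α[x] ⊆ U`. -/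
def FPtop (P : Set (Set X)) : TopologicalSpace X where
  IsOpen U := ∀ x ∈ U, ∃ α ∈ FP P, {y | (x, y) ∈ α} ⊆ U
  isOpen_univ := fun _ _ => ⟨Set.univ, Set.subset_univ _, fun _ _ => trivial⟩
  isOpen_inter := by
    intro U W hU hW x hx
    obtain ⟨α, hα, hαU⟩ := hU x hx.1
    obtain ⟨β, hβ, hβW⟩ := hW x hx.2
    exact ⟨α ∩ β, Set.subset_inter hα hβ, fun y hy => ⟨hαU hy.1, hβW hy.2⟩⟩
  isOpen_sUnion := by
    intro S hS x hx
    obtain ⟨U, hU, hxU⟩ := hx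
    obtain ⟨α, hα, h⟩ := hS U hU x hxU
    exact ⟨α, hα, fun y hy => ⟨U, hU, h hy⟩⟩

/-!
The open sets of `F_P` are the sets stable under the relation `α₀ = ⋃ {D × D : D ∈ P}`, so they are
closed under arbitrary intersections. For a partition `P`, the relation `α₀` is an equivalence and
hence generates a uniformity.

Conversely, a set in an Alexandroff space is open iff it is stable under generization. A uniform
space is R₀, so there generization is inseparability, an equivalence relation: the partition into
inseparability classes induces the topology.
-/

open Filter

section Alexandroff

variable [TopologicalSpace X]

theorem V_eq_nhdsKer_singleton (a : X) : V a = nhdsKer {a} := by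
  simp only [V, nhdsKer_def, singleton_subset_iff]

theorem alexandrovDiscrete_iff_isOpen_V : AlexandrovDiscrete X ↔ ∀ a : X, IsOpen (V a) := by
  simp only [V_eq_nhdsKer_singleton]
  refine ⟨fun _ _ => isOpen_nhdsKer, fun h => alexandrovDiscrete_iff_nhds.2 fun a => ?_⟩
  rw [← nhdsSet_singleton, ← nhdsSet_nhdsKer, (h a).nhdsSet_eq]

theorem isOpen_iff_forall_inseparable [AlexandrovDiscrete X] [R0Space X] {U : Set X} :
    IsOpen U ↔ ∀ x y, Inseparable x y → x ∈ U → y ∈ U := by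
  simp only [isOpen_iff_forall_specializes, specializes_iff_inseparable]
  exact ⟨fun h x y hxy => h y x hxy.symm, fun h x y hxy => h y x hxy.symm⟩

end Alexandroff

section BlockRel

variable {P : Set (Set X)}

/-- The relation `α₀ = ⋃ {D × D : D ∈ P}` of lying in a common block of `P`, as a set of pairs so
that it can serve as the generating entourage of `F_P`. -/
def blockRel (P : Set (Set X)) : SetRel X X :=
  ⋃ D ∈ P, D ×ˢ D

theorem mem_blockRel {x y : X} : (x, y) ∈ blockRel P ↔ ∃ D ∈ P, x ∈ D ∧ y ∈ D := by
  simp only [blockRel, mem_iUnion₂, mem_prod, exists_prop]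

theorem isRefl_blockRel (hP : ⋃₀ P = univ) : (blockRel P).IsRefl where
  refl x :=
    let ⟨D, hD, hx⟩ := mem_sUnion.1 (hP ▸ mem_univ x)
    mem_blockRel.2 ⟨D, hD, hx, hx⟩

theorem isSymm_blockRel (P : Set (Set X)) : (blockRel P).IsSymm where
  symm _ _ hxy :=
    let ⟨D, hD, hx, hy⟩ := mem_blockRel.1 hxy
    mem_blockRel.2 ⟨D, hD, hy, hx⟩

theorem isTrans_blockRel (hP : P.PairwiseDisjoint id) : (blockRel P).IsTrans where
  trans _ y _ hxy hyz := by
    obtain ⟨D, hD, hxD, hyD⟩ := mem_blockRel.1 hxy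
    obtain ⟨E, hE, hyE, hzE⟩ := mem_blockRel.1 hyz
    obtain rfl : D = E := hP.elim_set hD hE y hyD hyE
    exact mem_blockRel.2 ⟨D, hD, hxD, hzE⟩

theorem mem_blockRel_classes (r : Setoid X) {x y : X} : (x, y) ∈ blockRel r.classes ↔ r x y :=
  mem_blockRel.trans r.rel_iff_exists_classes.symm

end BlockRel

section FPtop

variable {P : Set (Set X)}

theorem isOpen_FPtop_iff {U : Set X} :
    IsOpen[FPtop P] U ↔ ∀ x y, (x, y) ∈ blockRel P → x ∈ U → y ∈ U where
  mp hU x _ hxy hx :=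
    let ⟨_, hα, hαU⟩ := hU x hx
    hαU (hα hxy)
  mpr hU x hx := ⟨blockRel P, Subset.rfl, fun _ hxy => hU x _ hxy hx⟩

theorem alexandrovDiscrete_FPtop (P : Set (Set X)) : @AlexandrovDiscrete X (FPtop P) :=
  @AlexandrovDiscrete.mk X (FPtop P) fun _ hS =>
    isOpen_FPtop_iff.2 fun x y hxy hx U hU => isOpen_FPtop_iff.1 (hS U hU) x y hxy (hx U hU)

/-- The uniform structure `F_P` of a partition `P`, which gives `FPtop P` a uniformity. Its filter
is the principal filter of `α₀`, whose sets are by definition those of `FP P`. -/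
def FPcore (hP : Setoid.IsPartition P) : UniformSpace.Core X where
  uniformity := 𝓟 (blockRel P)
  refl :=
    have := isRefl_blockRel hP.sUnion_eq_univ
    principal_mono.2 SetRel.id_subset
  symm := tendsto_principal_principal.2 fun _ => (isSymm_blockRel P).symm _ _
  comp := by
    have := isTrans_blockRel hP.pairwiseDisjoint
    exact lift'_le (mem_principal_self _) (principal_mono.2 SetRel.comp_subset_self)

theorem FPcore_toTopologicalSpace (hP : Setoid.IsPartition P) :
    (FPcore hP).toTopologicalSpace = FPtop P :=
  rfl

theorem uniformizable_FPtop (hP : Setoid.IsPartition P) : @Uniformizable X (FPtop P) :=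
  ⟨.ofCore (FPcore hP), FPcore_toTopologicalSpace hP⟩

theorem FPtop_classes_inseparableSetoid [t : TopologicalSpace X] [AlexandrovDiscrete X]
    [R0Space X] : FPtop (inseparableSetoid X).classes = t := by
  ext U
  simp only [isOpen_FPtop_iff, mem_blockRel_classes]
  exact isOpen_iff_forall_inseparable.symm

end FPtop

/-- `X` is a uniformizable Alexandroff space iff there is a partition `P` of
`X` such that the topology induced by the uniform structure `F_P` coincides
with the topology of `X`. -/
theorem stmt5 [t : TopologicalSpace X] :
    ((∀ a : X, IsOpen (V a)) ∧ Uniformizable X) ↔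
      ∃ P : Set (Set X), Setoid.IsPartition P ∧ FPtop P = t := by
  constructor
  · rintro ⟨hV, u, rfl⟩
    have : AlexandrovDiscrete X := alexandrovDiscrete_iff_isOpen_V.2 hV
    exact ⟨_, Setoid.isPartition_classes (inseparableSetoid X), FPtop_classes_inseparableSetoid⟩
  · rintro ⟨P, hP, rfl⟩
    have hV := (@alexandrovDiscrete_iff_isOpen_V X (FPtop P)).1 (alexandrovDiscrete_FPtop P)
    exact ⟨hV, uniformizable_FPtop hP⟩
end

section
/- Let X be a uniformizable topological space and suppose X is k-primal for some k ≥ 1, i.e., there exist self-maps f₁, …, f_k : X → X such that for every a ∈ X the set V_{f₁}(a) ∩ ⋯ ∩ V_{f_k}(a) is the smallest open neighbourhood of a. Then X is a functional Alexandroff space, i.e., there exists a single self-map f : X → X such that the topology of X equals the functional Alexandroff topology corresponding to f. -/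
open Set

variable {X : Type*}

/-- `Vf f a = ⋃ₙ f⁻ⁿ(a)` : the union of the preimages of `{a}` under all
iterates of `f` (including the 0-th iterate). -/
def Vf (f : X → X) (a : X) : Set X :=
  ⋃ n : ℕ, (f^[n]) ⁻¹' {a}

/-- The functional Alexandroff topology on `X` corresponding to `f`, generated
by the basis `{Vf f a : a ∈ X}`. -/
def funcAlexTop (f : X → X) : TopologicalSpace X :=
  TopologicalSpace.generateFrom {S : Set X | ∃ a : X, S = Vf f a}

/-- A topological space is functional Alexandroff if its topology is the
functional Alexandroff topology corresponding to some self-map. -/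
def IsFunctionalAlexandroff (X : Type*) [t : TopologicalSpace X] : Prop :=
  ∃ f : X → X, t = funcAlexTop f

/-!
Uniformizable spaces are R₀, so the sets `V a` partition `X`. Any two points of `V a` reach each
other by iterating any one of the maps `f i`, so `V a` is a singleton or lies in a periodic orbit of
`f i`; in either case it is finite. Rotating each `V a` cyclically gives a single map whose backward
orbits are exactly the sets `V a`.
-/

section Iterates

lemma mem_Vf {f : X → X} {a b : X} : b ∈ Vf f a ↔ ∃ n : ℕ, f^[n] b = a :=
  mem_iUnion

lemma finite_range_iterate_of_mem_periodicPts {f : X → X} {a : X}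
    (ha : a ∈ Function.periodicPts f) : (range fun n : ℕ => f^[n] a).Finite := by
  refine ((finite_Iio (Function.minimalPeriod f a)).image fun n => f^[n] a).subset ?_
  rintro _ ⟨n, rfl⟩
  exact ⟨n % Function.minimalPeriod f a,
    Nat.mod_lt _ (Function.minimalPeriod_pos_of_mem_periodicPts ha),
    Function.iterate_mod_minimalPeriod_eq⟩

lemma mem_periodicPts_of_mem_Vf_of_mem_Vf {f : X → X} {a b : X} (hne : a ≠ b)
    (hab : a ∈ Vf f b) (hba : b ∈ Vf f a) : a ∈ Function.periodicPts f := by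
  obtain ⟨m, hm⟩ := mem_Vf.1 hab
  obtain ⟨n, hn⟩ := mem_Vf.1 hba
  have hm_pos : 0 < m := Nat.pos_of_ne_zero fun h => hne (by simpa [h] using hm)
  have hperiod : f^[n + m] a = a := by rw [Function.iterate_add_apply, hm, hn]
  exact Function.mk_mem_periodicPts (Nat.add_pos_right n hm_pos) hperiod

lemma finite_of_forall_subset_Vf {f : X → X} {s : Set X} (h : ∀ a ∈ s, s ⊆ Vf f a) :
    s.Finite := by
  rcases s.subsingleton_or_nontrivial with hs | ⟨a, ha, b, hb, hne⟩
  · exact hs.finite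
  · have ha_periodic : a ∈ Function.periodicPts f :=
      mem_periodicPts_of_mem_Vf_of_mem_Vf hne (h b hb ha) (h a ha hb)
    exact (finite_range_iterate_of_mem_periodicPts ha_periodic).subset fun c hc =>
      mem_Vf.1 (h c hc ha)

lemma exists_forall_Vf_eq_preimage {Y : Type*} {π : X → Y} (hπ : ∀ y, (π ⁻¹' {y}).Finite) :
    ∃ f : X → X, ∀ a, Vf f a = π ⁻¹' {π a} := by
  choose σ hσ _ using fun y => (hπ y).countable.exists_cycleOn
  let f : X → X := fun x => σ (π x) x
  have hf_fibre (x : X) : π (f x) = π x := (hσ (π x)).1.mapsTo rfl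
  have hπ_iterate (x : X) (n : ℕ) : π (f^[n] x) = π x := by
    induction n with
    | zero => rfl
    | succ n ih => rw [Function.iterate_succ_apply', hf_fibre, ih]
  have hf_iterate (x : X) (n : ℕ) : f^[n] x = (σ (π x) ^ n) x := by
    induction n with
    | zero => rfl
    | succ n ih =>
      rw [Function.iterate_succ_apply', pow_succ', Equiv.Perm.mul_apply, ← ih]
      exact congrArg (fun y => σ y (f^[n] x)) (hπ_iterate x n)
  refine ⟨f, fun a => Subset.antisymm (fun b hb => ?_) fun b hb => ?_⟩
  · obtain ⟨n, rfl⟩ := mem_Vf.1 hb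
    exact (hπ_iterate b n).symm
  · obtain ⟨n, hn⟩ := (hσ (π b)).exists_pow_eq' (hπ (π b)) rfl (show π a = π b from hb.symm)
    exact mem_Vf.2 ⟨n, (hf_iterate b n).trans hn⟩

end Iterates

section Topology

lemma mem_V_iff_specializes_s10 [TopologicalSpace X] {a b : X} : b ∈ V a ↔ b ⤳ a := by
  simp only [V, mem_sInter, mem_ofPred_eq, and_imp, specializes_iff_forall_open]

lemma V_eq_preimage_mk [TopologicalSpace X] [R0Space X] (a : X) :
    V a = SeparationQuotient.mk ⁻¹' {SeparationQuotient.mk a} := by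
  ext b
  rw [mem_V_iff_specializes_s10, specializes_iff_inseparable, ← SeparationQuotient.mk_eq_mk]
  rfl

lemma isTopologicalBasis_range_V [TopologicalSpace X] (hopen : ∀ a : X, IsOpen (V a)) :
    TopologicalSpace.IsTopologicalBasis (range (V : X → Set X)) :=
  TopologicalSpace.isTopologicalBasis_of_isOpen_of_nhds (forall_mem_range.2 hopen)
    fun a _ ha hU =>
      ⟨V a, mem_range_self a, mem_V_iff_specializes_s10.2 specializes_rfl,
        sInter_subset_of_mem ⟨hU, ha⟩⟩

lemma eq_funcAlexTop_of_forall_Vf_eq_V [t : TopologicalSpace X] {f : X → X}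
    (hopen : ∀ a : X, IsOpen (V a)) (hf : ∀ a, Vf f a = V a) : t = funcAlexTop f := by
  simpa only [funcAlexTop, hf, range, eq_comm] using
    (isTopologicalBasis_range_V hopen).eq_generateFrom

lemma isFunctionalAlexandroff_of_finite_V [TopologicalSpace X] [R0Space X]
    (hopen : ∀ a : X, IsOpen (V a)) (hfin : ∀ a : X, (V a).Finite) :
    IsFunctionalAlexandroff X := by
  have hfibre : ∀ q : SeparationQuotient X, (SeparationQuotient.mk ⁻¹' {q}).Finite :=
    SeparationQuotient.surjective_mk.forall.2 fun a => V_eq_preimage_mk a ▸ hfin a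
  obtain ⟨f, hf⟩ := exists_forall_Vf_eq_preimage hfibre
  exact ⟨f, eq_funcAlexTop_of_forall_Vf_eq_V hopen fun a => (hf a).trans (V_eq_preimage_mk a).symm⟩

lemma finite_V_of_forall_V_subset_Vf [TopologicalSpace X] [R0Space X] {g : X → X}
    (hg : ∀ a, V a ⊆ Vf g a) (a : X) : (V a).Finite := by
  refine finite_of_forall_subset_Vf (f := g) fun b hb => ?_
  have hVb : V b = V a := by
    rw [V_eq_preimage_mk] at hb
    rw [V_eq_preimage_mk, V_eq_preimage_mk, mem_singleton_iff.1 hb]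
  exact hVb ▸ hg b

end Topology

theorem stmt10_general [TopologicalSpace X] [R0Space X] (hopen : ∀ a : X, IsOpen (V a))
    (g : X → X) (hg : ∀ a, V a ⊆ Vf g a) : IsFunctionalAlexandroff X :=
  isFunctionalAlexandroff_of_finite_V hopen (finite_V_of_forall_V_subset_Vf hg)

/-- Every uniformizable `k`-primal space (`k ≥ 1`) is a functional Alexandroff
space: if there are self-maps `f₁, …, f_k` such that for every `a` the set
`V_{f₁}(a) ∩ ⋯ ∩ V_{f_k}(a)` is open and equals `V a` (i.e. it is the smallest
open neighbourhood of `a`), then the topology of `X` is the functional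
Alexandroff topology of a single self-map. -/
theorem stmt10 [TopologicalSpace X] (hU : Uniformizable X)
    (k : ℕ) (hk : 1 ≤ k) (f : Fin k → X → X)
    (hprimal : ∀ a : X, IsOpen (⋂ i : Fin k, Vf (f i) a) ∧
      (⋂ i : Fin k, Vf (f i) a) = V a) :
    IsFunctionalAlexandroff X := by
  obtain ⟨_, rfl⟩ := hU
  exact stmt10_general (fun a => (hprimal a).2 ▸ (hprimal a).1) (f ⟨0, hk⟩)
    fun a => (hprimal a).2 ▸ iInter_subset _ _
end
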